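/- arXiv:1606.08246 — 2 statements merged into one kernel-verified Lean document; each statement's English description precedes it below -/
import Mathlib

section
/- Let G be a finite bipartite graph with color classes A and B, and b : V(G) → ℕ. The binary relation ⪯_A, defined on the set of b-consistent flexible components by chains of one-step relations ⊴_A through b-consistent flexible components, is a partial order (reflexive, transitive, and antisymmetric). -/
open scoped symmDiff

variable {V : Type} [Fintype V]

/-- `G` is bipartite with color classes `A` and `B`. -/
structure Bipartition (G : SimpleGraph V) (A B : Set V) : Prop where
  disjoint : Disjoint A B
  cover : A ∪ B = Set.univ
  between : ∀ ⦃u v : V⦄, G.Adj u v → (u ∈ A ∧ v ∈ B) ∨ (u ∈ B ∧ v ∈ A)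

/-- `M` is a `b`-matching of `G`: a set of edges of `G` such that each vertex `v` is
incident to at most `b v` edges of `M`. -/
def IsBMatching (G : SimpleGraph V) (b : V → ℕ) (M : Set (Sym2 V)) : Prop :=
  M ⊆ G.edgeSet ∧ ∀ v : V, {e ∈ M | v ∈ e}.ncard ≤ b v

/-- `M` is a maximum `b`-matching of `G`. -/
def IsMaxBMatching (G : SimpleGraph V) (b : V → ℕ) (M : Set (Sym2 V)) : Prop :=
  IsBMatching G b M ∧ ∀ N : Set (Sym2 V), IsBMatching G b N → N.ncard ≤ M.ncard

/-- `E[X]`: the set of edges of `G` with both ends in `X`. -/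
def edgesIn (G : SimpleGraph V) (X : Set V) : Set (Sym2 V) :=
  {e ∈ G.edgeSet | ∀ v ∈ e, v ∈ X}

/-- `b(X) = ∑_{v ∈ X} b v`. -/
noncomputable def bSum (b : V → ℕ) (X : Set V) : ℕ := ∑ᶠ v ∈ X, b v

/-- `Z` is a `b`-verifying set: `b(Zᶜ) + |E[Z]|` equals the size of a maximum `b`-matching. -/
def IsVerifying (G : SimpleGraph V) (b : V → ℕ) (Z : Set V) : Prop :=
  ∃ M : Set (Sym2 V), IsMaxBMatching G b M ∧ bSum b Zᶜ + (edgesIn G Z).ncard = M.ncard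

/-- `v` is `M`-tight. -/
def IsTight (b : V → ℕ) (M : Set (Sym2 V)) (v : V) : Prop :=
  {e ∈ M | v ∈ e}.ncard = b v

/-- `v` is `M`-loose. -/
def IsLoose (b : V → ℕ) (M : Set (Sym2 V)) (v : V) : Prop :=
  {e ∈ M | v ∈ e}.ncard < b v

/-- `M` is a perfect `b`-matching. -/
def IsPerfect (G : SimpleGraph V) (b : V → ℕ) (M : Set (Sym2 V)) : Prop :=
  IsBMatching G b M ∧ ∀ v : V, IsTight b M v

/-- An edge is `b`-inevitable if it is an edge of `G` contained in every maximum `b`-matching. -/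
def IsInevitable (G : SimpleGraph V) (b : V → ℕ) (e : Sym2 V) : Prop :=
  e ∈ G.edgeSet ∧ ∀ M : Set (Sym2 V), IsMaxBMatching G b M → e ∈ M

/-- An edge is `b`-forbidden if it is an edge of `G` contained in no maximum `b`-matching. -/
def IsForbidden (G : SimpleGraph V) (b : V → ℕ) (e : Sym2 V) : Prop :=
  e ∈ G.edgeSet ∧ ∀ M : Set (Sym2 V), IsMaxBMatching G b M → e ∉ M

/-- An edge is `b`-flexible if some maximum `b`-matching contains it and some does not. -/
def IsFlexibleEdge (G : SimpleGraph V) (b : V → ℕ) (e : Sym2 V) : Prop :=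
  (∃ M : Set (Sym2 V), IsMaxBMatching G b M ∧ e ∈ M) ∧
  (∃ M : Set (Sym2 V), IsMaxBMatching G b M ∧ e ∉ M)

/-- The spanning subgraph of `G` whose edges are the `b`-flexible edges. -/
def flexGraph (G : SimpleGraph V) (b : V → ℕ) : SimpleGraph V where
  Adj u v := IsFlexibleEdge G b s(u, v)
  symm := by
    refine ⟨?_⟩
    intro u v h
    rwa [Sym2.eq_swap] at h
  loopless := by
    refine ⟨?_⟩
    intro v h
    obtain ⟨⟨M, hM, heM⟩, -⟩ := h
    exact G.loopless.irrefl v ((G.mem_edgeSet).mp (hM.1.1 heM))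

/-- A `b`-flexible component of `G`, identified with the corresponding connected
component of the spanning subgraph of flexible edges. -/
abbrev FlexComp (G : SimpleGraph V) (b : V → ℕ) := (flexGraph G b).ConnectedComponent

/-- `D(G;b)`: the set of vertices that are `M`-loose for some maximum `b`-matching `M`. -/
def Dset (G : SimpleGraph V) (b : V → ℕ) : Set V :=
  {v | ∃ M : Set (Sym2 V), IsMaxBMatching G b M ∧ IsLoose b M v}

/-- `c` is a `b`-loose flexible component. -/
def LooseComp (G : SimpleGraph V) (b : V → ℕ) (c : FlexComp G b) : Prop :=
  ∃ v ∈ c.supp, v ∈ Dset G b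

/-- `c` is a `b`-inactive flexible component. -/
def InactiveComp (G : SimpleGraph V) (b : V → ℕ) (c : FlexComp G b) : Prop :=
  ∃ v, c.supp = {v} ∧ b v = 0

/-- `c` is a `b`-inconsistent flexible component. -/
def InconsistentComp (G : SimpleGraph V) (b : V → ℕ) (c : FlexComp G b) : Prop :=
  LooseComp G b c ∨ ∃ v, c.supp = {v} ∧ b v = 0 ∧ ∃ u ∈ Dset G b, G.Adj v u

/-- `c` is a `b`-consistent flexible component. -/
def ConsistentComp (G : SimpleGraph V) (b : V → ℕ) (c : FlexComp G b) : Prop :=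
  ¬ InconsistentComp G b c

/-- `c` is a `b`-loose flexible component hooked up by the color class `W`. -/
def LooseHooked (G : SimpleGraph V) (b : V → ℕ) (W : Set V) (c : FlexComp G b) : Prop :=
  ∃ v ∈ c.supp ∩ W, v ∈ Dset G b

/-- `c` is a `b`-inactive flexible component hooked up by the color class `W`. -/
def InactiveHooked (G : SimpleGraph V) (b : V → ℕ) (W : Set V) (c : FlexComp G b) : Prop :=
  ∃ v, c.supp = {v} ∧ b v = 0 ∧ ∃ u ∈ Dset G b ∩ W, G.Adj v u

/-- `c` is a `b`-inconsistent flexible component hooked up by the color class `W`. -/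
def HookedUp (G : SimpleGraph V) (b : V → ℕ) (W : Set V) (c : FlexComp G b) : Prop :=
  LooseHooked G b W c ∨ InactiveHooked G b W c

/-- `X` is separating: empty or a union of vertex sets of `b`-flexible components. -/
def IsSeparating (G : SimpleGraph V) (b : V → ℕ) (X : Set V) : Prop :=
  ∃ S : Set (FlexComp G b), X = ⋃ c ∈ S, c.supp

/-- The number of edges in the list `es` incident to `v` that lie in `M`. -/
noncomputable def edgeDeg (es : List (Sym2 V)) (M : Set (Sym2 V)) (v : V) : ℕ :=
  {e : Sym2 V | e ∈ es ∧ v ∈ e ∧ e ∈ M}.ncard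

/-- `p` is an `M`-wedge path from `x` to `y`. -/
def IsWedgePath {G : SimpleGraph V} (M : Set (Sym2 V)) {x y : V} (p : G.Walk x y) : Prop :=
  p.IsPath ∧ (∀ v ∈ p.support, v ≠ y → edgeDeg p.edges M v = 1) ∧ edgeDeg p.edges M y = 0

/-- `p` is an `M`-saturated path between `x` and `y`. -/
def IsSaturatedPath {G : SimpleGraph V} (M : Set (Sym2 V)) {x y : V} (p : G.Walk x y) : Prop :=
  p.IsPath ∧ ∀ v ∈ p.support, edgeDeg p.edges M v = 1

/-- `p` is an `M`-exposed path between `x` and `y`. -/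
def IsExposedPath {G : SimpleGraph V} (M : Set (Sym2 V)) {x y : V} (p : G.Walk x y) : Prop :=
  p.IsPath ∧ ∀ v ∈ p.support, edgeDeg p.edges Mᶜ v = 1

/-- `p` is an `(M; A, B)`-ascending path from `u` to `v`. -/
def IsAscending {G : SimpleGraph V} (A B : Set V) (M : Set (Sym2 V)) {u v : V}
    (p : G.Walk u v) : Prop :=
  (u ∈ A → v ∈ A → IsWedgePath M p) ∧
  (u ∈ A → v ∈ B → IsSaturatedPath M p) ∧
  (u ∈ B → v ∈ A → IsExposedPath M p) ∧
  (u ∈ B → v ∈ B → IsWedgePath M p.reverse)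

/-- The one-step relation `⊴_A` on `b`-flexible components: `c₁ ⊴_A c₂` iff `c₁ = c₂`, or
there is a `b`-inevitable edge between `V(c₁) ∩ A` and `V(c₂) ∩ B`, or a `b`-forbidden edge
between `V(c₂) ∩ A` and `V(c₁) ∩ B`. -/
def StepRel (G : SimpleGraph V) (b : V → ℕ) (A B : Set V) (c₁ c₂ : FlexComp G b) : Prop :=
  c₁ = c₂ ∨
  (∃ u ∈ c₁.supp ∩ A, ∃ v ∈ c₂.supp ∩ B, IsInevitable G b s(u, v)) ∨
  (∃ u ∈ c₂.supp ∩ A, ∃ v ∈ c₁.supp ∩ B, IsForbidden G b s(u, v))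

/-- The one-step relation `⊴_A` restricted to `b`-consistent flexible components. -/
def ConsStepRel (G : SimpleGraph V) (b : V → ℕ) (A B : Set V) (c₁ c₂ : FlexComp G b) : Prop :=
  ConsistentComp G b c₁ ∧ ConsistentComp G b c₂ ∧ StepRel G b A B c₁ c₂

/-- `I` is a lower ideal of the relation `r`. -/
def IsLowerIdeal {α : Type*} (r : α → α → Prop) (I : Set α) : Prop :=
  ∀ ⦃c d : α⦄, d ∈ I → r c d → c ∈ I

/-- `I` is an upper ideal of the relation `r`. -/
def IsUpperIdeal {α : Type*} (r : α → α → Prop) (I : Set α) : Prop :=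
  ∀ ⦃c d : α⦄, c ∈ I → r c d → d ∈ I

/-!
Fix a maximum `b`-matching `M` and direct each edge of `G` out of `A` if it lies in `M` and into `A`
otherwise. Taking the symmetric difference of `M` with a directed cycle preserves all degrees, so
every edge on a directed cycle is flexible. Conversely, let `M'` be another maximum `b`-matching.
The arcs on which `M` and `M'` differ have equal in- and out-degree at every vertex covered exactly
`b` times by both, so in a component that is not loose the head of such an arc can reach its tail
along further such arcs: the component is strongly connected in the `M`-orientation. A step
`c ⊴_A d` between distinct components is witnessed by an arc from `c` to `d` that is not flexible,
whereas a chain from `d` back to `c` would put this arc on a directed cycle.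
-/

open Relation

section Relation

variable {α : Type*} {r : α → α → Prop} {u v : α}

theorem antisymm_reflTransGen (h : ∀ a b, r a b → ReflTransGen r b a → a = b) :
    Std.Antisymm (ReflTransGen r) where
  antisymm a b hab hba := by
    induction hab using ReflTransGen.head_induction_on with
    | refl => rfl
    | head hac hcb ih =>
      obtain rfl := h _ _ hac (hcb.trans hba)
      exact ih hba

theorem exists_nodup_isChain_of_reflTransGen (h : ReflTransGen r v u) :
    ∃ l : List α, (v :: l).IsChain r ∧ (v :: l).Nodup ∧ (v :: l).getLast? = some u := by
  induction h using ReflTransGen.head_induction_on with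
  | refl => exact ⟨[], by simp⟩
  | @head a c hac _ ih =>
    obtain ⟨l, hchain, hnodup, hlast⟩ := ih
    by_cases ha : a ∈ c :: l
    · obtain ⟨s, t, hst⟩ := List.append_of_mem ha
      rw [hst] at hchain hnodup hlast
      exact ⟨t, hchain.right_of_append, hnodup.of_append_right, by simpa using hlast⟩
    · exact ⟨c :: l, hchain.cons_cons hac, List.nodup_cons.2 ⟨ha, hnodup⟩, by simpa using hlast⟩

theorem exists_perm_of_reflTransGen (huv : r u v) (h : ReflTransGen r v u) :
    ∃ σ : Equiv.Perm α, σ u = v ∧ ∀ x, σ x ≠ x → r x (σ x) := by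
  classical
  obtain ⟨l, hchain, hnodup, hlast⟩ := exists_nodup_isChain_of_reflTransGen h
  have hlast' : (v :: l)[l.length] = u := by
    simpa [List.getLast?_eq_getElem?] using hlast
  have hu : (v :: l).formPerm u = v := hlast' ▸ List.formPerm_apply_getElem_length v l
  refine ⟨(v :: l).formPerm, hu, fun x hx => ?_⟩
  obtain ⟨i, hi, rfl⟩ := List.getElem_of_mem (List.mem_of_formPerm_apply_ne hx)
  rcases (Nat.le_of_lt_succ hi).lt_or_eq with hlt | rfl
  · have hi' : i + 1 < (v :: l).length := Nat.succ_lt_succ hlt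
    rw [List.formPerm_apply_lt_getElem _ hnodup i hi']
    exact List.isChain_iff_getElem.1 hchain i hi'
  · rwa [hlast', hu]

/- No arc leaves the set `R` of vertices reachable from `v`; as arcs inside `R` are counted once as
outgoing and once as incoming, balance at the vertices of `R` leaves no arc entering `R`. -/
theorem reflTransGen_swap_of_ncard_eq [Finite α]
    (hbal : ∀ w, ReflTransGen r v w → {x | r w x}.ncard = {x | r x w}.ncard) (huv : r u v) :
    ReflTransGen r v u := by
  classical
  cases nonempty_fintype α
  let R : Finset α := {w | ReflTransGen r v w}
  have mem_R {w : α} : w ∈ R ↔ ReflTransGen r v w := by simp [R]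
  have hout : ∀ w ∈ R, (R.bipartiteAbove r w).card = {x | r w x}.ncard := fun w hw => by
    rw [← Set.ncard_coe_finset]
    congr 1 with x
    simpa [Finset.bipartiteAbove, mem_R] using (mem_R.1 hw).tail
  have hsub (w : α) : (R.bipartiteBelow r w : Set α) ⊆ {x | r x w} := fun x hx =>
    (Finset.mem_bipartiteBelow r).1 hx |>.2
  have hin : ∀ w ∈ R, (R.bipartiteBelow r w).card ≤ {x | r x w}.ncard := fun w _ => by
    rw [← Set.ncard_coe_finset]
    exact Set.ncard_le_ncard (hsub w)
  have hsum : ∑ w ∈ R, (R.bipartiteBelow r w).card = ∑ w ∈ R, {x | r x w}.ncard := by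
    rw [← Finset.sum_card_bipartiteAbove_eq_sum_card_bipartiteBelow]
    exact Finset.sum_congr rfl fun w hw => (hout w hw).trans (hbal w (mem_R.1 hw))
  have hv := (Finset.sum_eq_sum_iff_of_le hin).1 hsum v (mem_R.2 .refl)
  rw [← Set.ncard_coe_finset] at hv
  have hu : u ∈ (R.bipartiteBelow r v : Set α) :=
    Set.eq_of_subset_of_ncard_le (hsub v) hv.ge ▸ huv
  exact mem_R.1 ((Finset.mem_bipartiteBelow r).1 hu).1

end Relation

section EdgeSet

variable {α : Type*} {M N : Set (Sym2 α)} {σ : Equiv.Perm α} {v : α}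

theorem ncard_symmDiff_pair {s : Set α} {a b : α} (h : a ∈ s ↔ b ∉ s) :
    (s ∆ {a, b}).ncard = s.ncard := by
  wlog ha : a ∈ s generalizing a b
  · rw [Set.pair_comm]
    exact this (by tauto) (by tauto)
  have hb : b ∉ s := h.1 ha
  rw [← Set.ncard_exchange hb ha]
  congr 1 with x
  simp only [Set.mem_symmDiff, Set.mem_insert_iff, Set.mem_singleton_iff, Set.mem_sdiff]
  grind

/-- The vertices joined to `v` by an edge in `M`. -/
def edgeNeighbors (M : Set (Sym2 α)) (v : α) : Set α := {w | s(v, w) ∈ M}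

theorem ncard_incident_eq_ncard_edgeNeighbors (M : Set (Sym2 α)) (v : α) :
    {e ∈ M | v ∈ e}.ncard = (edgeNeighbors M v).ncard := by
  have himage : {e ∈ M | v ∈ e} = (s(v, ·)) '' edgeNeighbors M v := by
    ext e
    constructor
    · rintro ⟨he, w, rfl⟩
      exact ⟨w, he, rfl⟩
    · rintro ⟨w, hw, rfl⟩
      exact ⟨hw, Sym2.mem_mk_left v w⟩
  rw [himage, Set.ncard_image_of_injective _ fun _ _ => Sym2.congr_right.1]

theorem sum_ncard_incident [Fintype α] (hM : ∀ e ∈ M, ¬ e.IsDiag) :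
    ∑ v, {e ∈ M | v ∈ e}.ncard = 2 * M.ncard := by
  classical
  obtain ⟨H, rfl⟩ : ∃ H : SimpleGraph α, H.edgeSet = M :=
    ⟨.fromEdgeSet M, by
      rw [SimpleGraph.edgeSet_fromEdgeSet, sdiff_eq_left, Set.disjoint_left]
      exact hM⟩
  have hdegree (v : α) : {e ∈ H.edgeSet | v ∈ e}.ncard = H.degree v := by
    rw [← H.card_incidenceSet_eq_degree, ← Nat.card_eq_fintype_card]
    rfl
  simp only [hdegree, H.sum_degrees_eq_twice_card_edges, Set.ncard_eq_toFinset_card',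
    SimpleGraph.edgeFinset]

theorem ncard_eq_of_ncard_incident_eq [Finite α] (hM : ∀ e ∈ M, ¬ e.IsDiag)
    (hN : ∀ e ∈ N, ¬ e.IsDiag) (h : ∀ v, {e ∈ M | v ∈ e}.ncard = {e ∈ N | v ∈ e}.ncard) :
    M.ncard = N.ncard := by
  cases nonempty_fintype α
  have hsum : 2 * M.ncard = 2 * N.ncard := by
    simp only [← sum_ncard_incident hM, ← sum_ncard_incident hN, h]
  lia

/-- The edges `s(x, σ x)` traversed by the nontrivial cycles of `σ`. -/
def permEdges (σ : Equiv.Perm α) : Set (Sym2 α) := {e | ∃ x, σ x ≠ x ∧ s(x, σ x) = e}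

theorem edgeNeighbors_permEdges_of_apply_eq (hv : σ v = v) :
    edgeNeighbors (permEdges σ) v = ∅ := by
  refine Set.eq_empty_of_forall_notMem fun w => ?_
  rintro ⟨x, hx, he⟩
  rcases Sym2.eq_iff.1 he with ⟨rfl, -⟩ | ⟨-, h⟩
  · exact hx hv
  · exact hx (h.trans (σ.injective (h.trans hv.symm)).symm)

theorem edgeNeighbors_permEdges_of_apply_ne (hv : σ v ≠ v) :
    edgeNeighbors (permEdges σ) v = {σ v, σ⁻¹ v} := by
  ext w
  constructor
  · rintro ⟨x, -, he⟩
    rcases Sym2.eq_iff.1 he with ⟨rfl, rfl⟩ | ⟨rfl, rfl⟩ <;> simp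
  · rintro (rfl | rfl)
    · exact ⟨v, hv, rfl⟩
    · exact ⟨σ⁻¹ v, fun h => hv (by simpa using congrArg σ h), by simp [Sym2.eq_swap]⟩

end EdgeSet

section BMatching

omit [Fintype V]

variable {G : SimpleGraph V} {A B : Set V} {b : V → ℕ} {M M' : Set (Sym2 V)} {u v w : V}

namespace Bipartition

theorem notMem_left (hG : Bipartition G A B) (hv : v ∈ B) : v ∉ A :=
  fun hA => Set.disjoint_left.1 hG.disjoint hA hv

theorem mem_left_iff_notMem_left (hG : Bipartition G A B) (huv : G.Adj u v) : u ∈ A ↔ v ∉ A := by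
  rcases hG.between huv with ⟨hu, hv⟩ | ⟨hu, hv⟩
  · exact iff_of_true hu (hG.notMem_left hv)
  · exact iff_of_false (hG.notMem_left hu) (not_not_intro hv)

end Bipartition

namespace IsMaxBMatching

theorem isFlexibleEdge_iff (hM : IsMaxBMatching G b M) {e : Sym2 V} :
    IsFlexibleEdge G b e ↔ ∃ M', IsMaxBMatching G b M' ∧ (e ∈ M' ↔ e ∉ M) := by
  constructor
  · rintro ⟨⟨M₁, hM₁, he₁⟩, ⟨M₂, hM₂, he₂⟩⟩
    by_cases he : e ∈ M
    · exact ⟨M₂, hM₂, by tauto⟩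
    · exact ⟨M₁, hM₁, by tauto⟩
  · rintro ⟨M', hM', he'⟩
    by_cases he : e ∈ M
    · exact ⟨⟨M, hM, he⟩, ⟨M', hM', by tauto⟩⟩
    · exact ⟨⟨M', hM', by tauto⟩, ⟨M, hM, he⟩⟩

theorem ncard_incident_eq (hM : IsMaxBMatching G b M) (hv : v ∉ Dset G b) :
    {e ∈ M | v ∈ e}.ncard = b v :=
  (hM.1.2 v).eq_of_not_lt fun hlt => hv ⟨M, hM, hlt⟩

theorem of_ncard_incident_eq [Finite V] (hM : IsMaxBMatching G b M) (hM' : M' ⊆ G.edgeSet)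
    (h : ∀ v, {e ∈ M' | v ∈ e}.ncard = {e ∈ M | v ∈ e}.ncard) : IsMaxBMatching G b M' := by
  have hcard : M'.ncard = M.ncard :=
    ncard_eq_of_ncard_incident_eq (fun _ he => G.not_isDiag_of_mem_edgeSet (hM' he))
      (fun _ he => G.not_isDiag_of_mem_edgeSet (hM.1.1 he)) h
  exact ⟨⟨hM', fun v => (h v).trans_le (hM.1.2 v)⟩, fun N hN => (hM.2 N hN).trans_eq hcard.symm⟩

end IsMaxBMatching

theorem exists_isMaxBMatching [Finite V] (G : SimpleGraph V) (b : V → ℕ) :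
    ∃ M, IsMaxBMatching G b M := by
  have hempty : IsBMatching G b ∅ := by simp [IsBMatching]
  obtain ⟨M, hM, hmax⟩ :=
    Set.exists_max_image {M | IsBMatching G b M} Set.ncard (Set.toFinite _) ⟨∅, hempty⟩
  exact ⟨M, hM, hmax⟩

/-- The arcs of the `M`-orientation of a bipartite graph with color class `A`: edges in `M` are
directed away from `A`, all other edges towards `A`. -/
def ResidualArc (G : SimpleGraph V) (A : Set V) (M : Set (Sym2 V)) (x y : V) : Prop :=
  G.Adj x y ∧ (x ∈ A ↔ s(x, y) ∈ M)

/-- The arcs of the `M`-orientation that have the opposite direction in the `M'`-orientation. In a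
bipartite graph these are the edges on which `M` and `M'` differ, oriented according to `M`. -/
def ReversedArc (G : SimpleGraph V) (A : Set V) (M M' : Set (Sym2 V)) (x y : V) : Prop :=
  ResidualArc G A M x y ∧ ResidualArc G A M' y x

theorem residualArc_or_swap (hG : Bipartition G A B) (huv : G.Adj u v) (M : Set (Sym2 V)) :
    ResidualArc G A M u v ∨ ResidualArc G A M v u := by
  have hside := hG.mem_left_iff_notMem_left huv
  simp only [ResidualArc, huv, huv.symm, true_and, Sym2.eq_swap (a := v)]
  tauto

theorem ResidualArc.swap_iff (hG : Bipartition G A B) (huv : ResidualArc G A M u v) :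
    ResidualArc G A M' v u ↔ (s(u, v) ∈ M' ↔ s(u, v) ∉ M) := by
  have hside := hG.mem_left_iff_notMem_left huv.1
  have hM := huv.2
  simp only [ResidualArc, huv.1.symm, true_and, Sym2.eq_swap (a := v)]
  tauto

theorem ResidualArc.isFlexibleEdge_iff (hG : Bipartition G A B) (hM : IsMaxBMatching G b M)
    (huv : ResidualArc G A M u v) :
    IsFlexibleEdge G b s(u, v) ↔ ∃ M', IsMaxBMatching G b M' ∧ ResidualArc G A M' v u := by
  simp only [hM.isFlexibleEdge_iff, huv.swap_iff hG]

theorem IsMaxBMatching.symmDiff_permEdges [Finite V] (hG : Bipartition G A B)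
    (hM : IsMaxBMatching G b M) {σ : Equiv.Perm V}
    (hσ : ∀ x, σ x ≠ x → ResidualArc G A M x (σ x)) : IsMaxBMatching G b (M ∆ permEdges σ) := by
  refine hM.of_ncard_incident_eq ?_ fun v => ?_
  · rintro e (⟨he, -⟩ | ⟨⟨x, hx, rfl⟩, -⟩)
    · exact hM.1.1 he
    · exact (hσ x hx).1
  rw [ncard_incident_eq_ncard_edgeNeighbors, ncard_incident_eq_ncard_edgeNeighbors]
  change (edgeNeighbors M v ∆ edgeNeighbors (permEdges σ) v).ncard = _
  by_cases hv : σ v = v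
  · rw [edgeNeighbors_permEdges_of_apply_eq hv, ← Set.bot_eq_empty, symmDiff_bot]
  · have hout := hσ v hv
    have hin : ResidualArc G A M (σ⁻¹ v) v := by
      simpa using hσ (σ⁻¹ v) fun h => hv (by simpa using congrArg σ h)
    have hside := hG.mem_left_iff_notMem_left hin.1
    rw [edgeNeighbors_permEdges_of_apply_ne hv]
    refine ncard_symmDiff_pair ?_
    change s(v, σ v) ∈ M ↔ s(v, σ⁻¹ v) ∉ M
    rw [← hout.2, Sym2.eq_swap, ← hin.2]
    tauto

theorem setOf_reversedArc_of_mem (hG : Bipartition G A B) (hM : M ⊆ G.edgeSet) (hv : v ∈ A) :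
    {w | ReversedArc G A M M' v w} = edgeNeighbors M v \ edgeNeighbors M' v := by
  ext w
  constructor
  · rintro ⟨hvw, hwv⟩
    have hmem : s(v, w) ∈ M := hvw.2.1 hv
    exact ⟨hmem, fun hmem' => ((hvw.swap_iff hG).1 hwv).1 hmem' hmem⟩
  · rintro ⟨hmem, hmem'⟩
    have hvw : ResidualArc G A M v w := ⟨hM hmem, iff_of_true hv hmem⟩
    exact ⟨hvw, (hvw.swap_iff hG).2 (iff_of_false hmem' (not_not_intro hmem))⟩

theorem setOf_reversedArc_of_notMem (hG : Bipartition G A B) (hM' : M' ⊆ G.edgeSet) (hv : v ∉ A) :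
    {w | ReversedArc G A M M' v w} = edgeNeighbors M' v \ edgeNeighbors M v := by
  ext w
  constructor
  · rintro ⟨hvw, hwv⟩
    have hmem : s(v, w) ∉ M := mt hvw.2.2 hv
    exact ⟨((hvw.swap_iff hG).1 hwv).2 hmem, hmem⟩
  · rintro ⟨hmem', hmem⟩
    have hvw : ResidualArc G A M v w := ⟨hM' hmem', iff_of_false hv hmem⟩
    exact ⟨hvw, (hvw.swap_iff hG).2 (iff_of_true hmem' hmem)⟩

theorem ncard_reversedArc_out_eq_in [Finite V] (hG : Bipartition G A B) (hM : M ⊆ G.edgeSet)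
    (hM' : M' ⊆ G.edgeSet) (hdeg : {e ∈ M | v ∈ e}.ncard = {e ∈ M' | v ∈ e}.ncard) :
    {w | ReversedArc G A M M' v w}.ncard = {w | ReversedArc G A M M' w v}.ncard := by
  have hin : {w | ReversedArc G A M M' w v} = {w | ReversedArc G A M' M v w} :=
    Set.ext fun _ => and_comm
  rw [ncard_incident_eq_ncard_edgeNeighbors, ncard_incident_eq_ncard_edgeNeighbors,
    Set.ncard_eq_ncard_iff_ncard_sdiff_eq_ncard_sdiff] at hdeg
  rw [hin]
  by_cases hv : v ∈ A
  · rw [setOf_reversedArc_of_mem hG hM hv, setOf_reversedArc_of_mem hG hM' hv, hdeg]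
  · rw [setOf_reversedArc_of_notMem hG hM' hv, setOf_reversedArc_of_notMem hG hM hv, hdeg]

theorem ResidualArc.isFlexibleEdge_of_reflTransGen [Finite V] (hG : Bipartition G A B)
    (hM : IsMaxBMatching G b M) (huv : ResidualArc G A M u v)
    (hvu : ReflTransGen (ResidualArc G A M) v u) : IsFlexibleEdge G b s(u, v) := by
  obtain ⟨σ, rfl, hσ⟩ := exists_perm_of_reflTransGen huv hvu
  have hmem : s(u, σ u) ∈ permEdges σ := ⟨u, huv.1.ne', rfl⟩
  refine hM.isFlexibleEdge_iff.2 ⟨M ∆ permEdges σ, hM.symmDiff_permEdges hG hσ, ?_⟩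
  rw [Set.mem_symmDiff]
  tauto

variable {c d : FlexComp G b}

theorem ResidualArc.reflTransGen_swap [Finite V] (hG : Bipartition G A B)
    (hM : IsMaxBMatching G b M) (huv : ResidualArc G A M u v) (hflex : IsFlexibleEdge G b s(u, v))
    (hc : ¬ LooseComp G b c) (hv : v ∈ c.supp) : ReflTransGen (ResidualArc G A M) v u := by
  obtain ⟨M', hM', hvu⟩ := (huv.isFlexibleEdge_iff hG hM).1 hflex
  have hsupp {w : V} (hw : ReflTransGen (ReversedArc G A M M') v w) : w ∈ c.supp := by
    induction hw with
    | refl => exact hv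
    | tail _ hxy hx =>
      have hadj : (flexGraph G b).Adj _ _ := (hxy.1.isFlexibleEdge_iff hG hM).2 ⟨M', hM', hxy.2⟩
      exact (c.mem_supp_congr_adj hadj).1 hx
  have hbal (w : V) (hw : ReflTransGen (ReversedArc G A M M') v w) :
      {x | ReversedArc G A M M' w x}.ncard = {x | ReversedArc G A M M' x w}.ncard := by
    have hwD : w ∉ Dset G b := fun hwD => hc ⟨w, hsupp hw, hwD⟩
    exact ncard_reversedArc_out_eq_in hG hM.1.1 hM'.1.1
      ((hM.ncard_incident_eq hwD).trans (hM'.ncard_incident_eq hwD).symm)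
  exact ReflTransGen.mono (fun _ _ hxy => hxy.1) _ _
    (reflTransGen_swap_of_ncard_eq hbal ⟨huv, hvu⟩)

theorem reflTransGen_residualArc_of_mem_supp [Finite V] (hG : Bipartition G A B)
    (hM : IsMaxBMatching G b M) (hc : ¬ LooseComp G b c) (hu : u ∈ c.supp) (hv : v ∈ c.supp) :
    ReflTransGen (ResidualArc G A M) u v := by
  have hreach : ReflTransGen (flexGraph G b).Adj u v :=
    (SimpleGraph.reachable_iff_reflTransGen u v).1 (c.reachable_of_mem_supp hu hv)
  induction hreach using ReflTransGen.head_induction_on with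
  | refl => exact .refl
  | @head x y hxy _ ih =>
    refine .trans ?_ (ih ((c.mem_supp_congr_adj hxy).1 hu))
    have hadj : G.Adj x y := by
      obtain ⟨⟨N, hN, hmem⟩, -⟩ := hxy
      exact hN.1.1 hmem
    rcases residualArc_or_swap hG hadj M with h | h
    · exact .single h
    · exact h.reflTransGen_swap hG hM hxy.symm hc hu

theorem StepRel.eq_or_exists_residualArc (hG : Bipartition G A B) (hM : IsMaxBMatching G b M)
    (h : StepRel G b A B c d) :
    c = d ∨ ∃ u ∈ c.supp, ∃ v ∈ d.supp,
      ResidualArc G A M u v ∧ ¬ IsFlexibleEdge G b s(u, v) := by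
  rcases h with rfl | ⟨u, hu, v, hv, hadj, hinev⟩ | ⟨v, hv, u, hu, hadj, hforb⟩
  · exact .inl rfl
  · refine .inr ⟨u, hu.1, v, hv.1, ⟨hadj, iff_of_true hu.2 (hinev M hM)⟩, ?_⟩
    rintro ⟨-, N, hN, hmem⟩
    exact hmem (hinev N hN)
  · rw [Sym2.eq_swap] at hadj hforb
    refine .inr ⟨u, hu.1, v, hv.1, ⟨hadj, iff_of_false (hG.notMem_left hu.2) (hforb M hM)⟩, ?_⟩
    rintro ⟨⟨N, hN, hmem⟩, -⟩
    exact hforb N hN hmem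

/-- The one-step relation `⊴_A` between flexible components that are not `b`-loose. These include
all `b`-consistent components, and also the inactive ones with a neighbor in `D(G;b)`. -/
def NonlooseStepRel (G : SimpleGraph V) (b : V → ℕ) (A B : Set V) (c₁ c₂ : FlexComp G b) : Prop :=
  ¬ LooseComp G b c₁ ∧ ¬ LooseComp G b c₂ ∧ StepRel G b A B c₁ c₂

theorem consStepRel_le_nonlooseStepRel (G : SimpleGraph V) (b : V → ℕ) (A B : Set V) :
    ConsStepRel G b A B ≤ NonlooseStepRel G b A B :=
  fun _ _ ⟨hc, hd, hstep⟩ => ⟨mt .inl hc, mt .inl hd, hstep⟩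

theorem reflTransGen_residualArc_of_nonlooseStepRel [Finite V] (hG : Bipartition G A B)
    (hM : IsMaxBMatching G b M) (hc : ¬ LooseComp G b c)
    (hcd : ReflTransGen (NonlooseStepRel G b A B) c d) (hu : u ∈ c.supp) (hv : v ∈ d.supp) :
    ReflTransGen (ResidualArc G A M) u v := by
  induction hcd generalizing v with
  | refl => exact reflTransGen_residualArc_of_mem_supp hG hM hc hu hv
  | tail _ hstep ih =>
    obtain ⟨-, hd, hstep⟩ := hstep
    rcases hstep.eq_or_exists_residualArc hG hM with rfl | ⟨x, hx, y, hy, hxy, -⟩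
    · exact ih hv
    · exact ((ih hx).tail hxy).trans (reflTransGen_residualArc_of_mem_supp hG hM hd hy hv)

theorem NonlooseStepRel.eq_of_reflTransGen [Finite V] (hG : Bipartition G A B)
    (hcd : NonlooseStepRel G b A B c d) (hdc : ReflTransGen (NonlooseStepRel G b A B) d c) :
    c = d := by
  obtain ⟨M, hM⟩ := exists_isMaxBMatching G b
  obtain ⟨-, hd, hstep⟩ := hcd
  refine (hstep.eq_or_exists_residualArc hG hM).resolve_right ?_
  rintro ⟨u, hu, v, hv, huv, hrigid⟩
  exact hrigid (huv.isFlexibleEdge_of_reflTransGen hG hM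
    (reflTransGen_residualArc_of_nonlooseStepRel hG hM hd hdc hv hu))

theorem stmt_13_general [Finite V] (hG : Bipartition G A B) (b : V → ℕ) :
    IsPartialOrder (FlexComp G b) (ReflTransGen (NonlooseStepRel G b A B)) where
  toAntisymm := antisymm_reflTransGen fun _ _ => NonlooseStepRel.eq_of_reflTransGen hG

end BMatching

/-- The relation `⪯_A`, defined on `b`-consistent flexible components as chains of one-step
relations `⊴_A` through `b`-consistent flexible components, is reflexive, transitive, and
antisymmetric. -/
theorem stmt_13 (G : SimpleGraph V) (A B : Set V) (hG : Bipartition G A B) (b : V → ℕ) :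
    (∀ c : FlexComp G b, ConsistentComp G b c →
      Relation.ReflTransGen (ConsStepRel G b A B) c c) ∧
    (∀ c d e : FlexComp G b, Relation.ReflTransGen (ConsStepRel G b A B) c d →
      Relation.ReflTransGen (ConsStepRel G b A B) d e →
      Relation.ReflTransGen (ConsStepRel G b A B) c e) ∧
    (∀ c d : FlexComp G b, Relation.ReflTransGen (ConsStepRel G b A B) c d →
      Relation.ReflTransGen (ConsStepRel G b A B) d c → c = d) := by
  have hpo := stmt_13_general hG b
  have hle := ReflTransGen.mono (consStepRel_le_nonlooseStepRel G b A B)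
  exact ⟨fun _ _ => .refl, fun _ _ _ => .trans,
    fun c d hcd hdc => hpo.antisymm c d (hle c d hcd) (hle d c hdc)⟩
end

section
/- Let G be a finite bipartite graph with color classes A and B, b : V(G) → ℕ, and let C₁ and C₂ be b-consistent flexible components with C₁ ⪯_A C₂, witnessed by b-consistent flexible components D₁, …, D_k (k ≥ 1) with C₁ = D₁, C₂ = D_k and D₁ ⊴_A ⋯ ⊴_A D_k. Write A_i := V(C_i) ∩ A and B_i := V(C_i) ∩ B for i = 1, 2. Then for every maximum b-matching M of G: (i) for every x ∈ A₁ and y ∈ A₂ there is an M-wedge path from x to y; (ii) for every x ∈ A₁ and y ∈ B₂ there is an M-saturated path between x and y; (iii) for every x ∈ A₂ and y ∈ B₁ there is an M-exposed path between x and y; (iv) for every x ∈ B₁ and y ∈ B₂ there is an M-wedge path from y to x. Moreover, these paths can be chosen with all their vertices contained in V(D₁) ∪ ⋯ ∪ V(D_k). -/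
open scoped symmDiff

variable {V : Type} [Fintype V]

/-!
Orient every edge of `M` from `A` to `B` and every other edge from `B` to `A`. A directed path from
`x` to `y` is then an ascending path: an inner vertex in `A` is left, and one in `B` is entered,
through an `M`-edge, and the colors of `x` and `y` decide which of the four types it has. An
inevitable or forbidden edge witnessing `C₁ ⊴_A C₂` is an arc from `C₁` to `C₂`, so it remains to
see that each component of the chain is strongly connected.

A flexible edge oriented from `u` to `v` by `M` is reversed by some other maximum `b`-matching `N`.
All vertices of a component that is not loose are tight for both `M` and `N`, so there the arcs
reversed by `N` have equal in-degree and out-degree. A set closed under such a balanced relation is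
also closed backwards; applied to the vertices reachable from `v`, this leads back to `u`.
-/

section Digraph

variable {α : Type*}

open scoped Finset in
theorem mem_of_rel_of_balanced [Finite α] {r : α → α → Prop} {R : Set α}
    (hclosed : ∀ x ∈ R, ∀ y, r x y → y ∈ R)
    (hbal : ∀ x ∈ R, {y | r x y}.ncard = {y | r y x}.ncard)
    {u v : α} (hv : v ∈ R) (huv : r u v) : u ∈ R := by
  classical
  have := Fintype.ofFinite α
  have hle : ∀ x ∈ R.toFinset, #{y ∈ R.toFinset | r y x} ≤ #{y | r y x} := fun x _ ↦
    Finset.card_le_card (Finset.filter_subset_filter _ (Finset.subset_univ _))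
  -- The arcs leaving vertices of `R` all stay inside `R`, so they exhaust the arcs entering `R`.
  have hcount : ∑ x ∈ R.toFinset, #{y ∈ R.toFinset | r y x} = ∑ x ∈ R.toFinset, #{y | r y x} :=
    calc ∑ x ∈ R.toFinset, #{y ∈ R.toFinset | r y x}
      _ = ∑ x ∈ R.toFinset, #{y ∈ R.toFinset | r x y} :=
        (Finset.sum_card_bipartiteAbove_eq_sum_card_bipartiteBelow r).symm
      _ = ∑ x ∈ R.toFinset, #{y | r x y} := by
        refine Finset.sum_congr rfl fun x hx ↦ congrArg Finset.card ?_
        ext y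
        simpa using hclosed x (Set.mem_toFinset.1 hx) y
      _ = ∑ x ∈ R.toFinset, #{y | r y x} := by
        refine Finset.sum_congr rfl fun x hx ↦ ?_
        simpa [Set.ncard_eq_toFinset_card'] using hbal x (Set.mem_toFinset.1 hx)
  have hcard : #{y ∈ R.toFinset | r y v} = #{y | r y v} :=
    (Finset.sum_eq_sum_iff_of_le hle).1 hcount v (Set.mem_toFinset.2 hv)
  have hpred : R.toFinset.filter (r · v) = Finset.univ.filter (r · v) :=
    Finset.eq_of_subset_of_card_le (Finset.filter_subset_filter _ (Finset.subset_univ _)) hcard.ge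
  have hu : u ∈ R.toFinset.filter (r · v) :=
    hpred ▸ Finset.mem_filter.2 ⟨Finset.mem_univ u, huv⟩
  exact Set.mem_toFinset.1 (Finset.mem_filter.1 hu).1

/-- `ReachesWithin D S u v` says that some directed walk of `D` leads from `u` to `v` and stays in
`S` after its first vertex; `u` itself need not lie in `S`. -/
def ReachesWithin (D : Digraph α) (S : Set α) : α → α → Prop :=
  Relation.ReflTransGen fun u v ↦ D.Adj u v ∧ v ∈ S

theorem ReachesWithin.mono {D : Digraph α} {S T : Set α} (hST : S ⊆ T) {u v : α}
    (h : ReachesWithin D S u v) : ReachesWithin D T u v :=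
  Relation.ReflTransGen.mono (fun _ _ h ↦ ⟨h.1, hST h.2⟩) _ _ h

theorem ReachesWithin.mem {D : Digraph α} {S : Set α} {u v : α} (h : ReachesWithin D S u v)
    (hu : u ∈ S) : v ∈ S := by
  obtain rfl | ⟨_, _, _, hv⟩ := h.cases_tail
  exacts [hu, hv]

/-- `p` is a directed walk of `D`: it traverses each of its edges along an arc of `D`. -/
def IsDirectedWalk {G : SimpleGraph α} (D : Digraph α) {u v : α} (p : G.Walk u v) : Prop :=
  ∀ d ∈ p.darts, D.Adj d.fst d.snd

theorem ReachesWithin.exists_isDirectedWalk {G : SimpleGraph α} {D : Digraph α}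
    (hDG : ∀ ⦃u v⦄, D.Adj u v → G.Adj u v) {S : Set α} {u v : α} (hu : u ∈ S)
    (h : ReachesWithin D S u v) :
    ∃ p : G.Walk u v, IsDirectedWalk D p ∧ ∀ w ∈ p.support, w ∈ S := by
  induction h using Relation.ReflTransGen.head_induction_on with
  | refl => exact ⟨.nil, by simp [IsDirectedWalk], by simpa using hu⟩
  | head hadj _ ih =>
    obtain ⟨p, hp, hpS⟩ := ih hadj.2
    exact ⟨.cons (hDG hadj.1) p, by simpa [IsDirectedWalk] using ⟨hadj.1, hp⟩,
      by simpa using ⟨hu, hpS⟩⟩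

theorem ReachesWithin.exists_isPath_isDirectedWalk {G : SimpleGraph α} {D : Digraph α}
    (hDG : ∀ ⦃u v⦄, D.Adj u v → G.Adj u v) {S : Set α} {u v : α} (hu : u ∈ S)
    (h : ReachesWithin D S u v) :
    ∃ p : G.Walk u v, p.IsPath ∧ IsDirectedWalk D p ∧ ∀ w ∈ p.support, w ∈ S := by
  classical
  obtain ⟨p, hp, hpS⟩ := h.exists_isDirectedWalk hDG hu
  exact ⟨p.bypass, p.bypass_isPath, fun d hd ↦ hp d (p.darts_bypass_subset_darts hd),
    fun w hw ↦ hpS w (p.support_bypass_subset_support hw)⟩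

end Digraph

variable {α : Type} {G : SimpleGraph α} {A B : Set α} {b : α → ℕ} {M N : Set (Sym2 α)}

section Bipartition

theorem Bipartition.symm (hG : Bipartition G A B) : Bipartition G B A where
  disjoint := hG.disjoint.symm
  cover := by rw [Set.union_comm, hG.cover]
  between _ _ h := (hG.between h).symm

theorem Bipartition.mem_right_iff (hG : Bipartition G A B) {v : α} : v ∈ B ↔ v ∉ A := by
  have hcompl : B = Aᶜ := (IsCompl.compl_eq ⟨hG.disjoint, codisjoint_iff.2 hG.cover⟩).symm
  rw [hcompl, Set.mem_compl_iff]

theorem Bipartition.mem_left_iff_of_adj (hG : Bipartition G A B) {u v : α} (h : G.Adj u v) :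
    v ∈ A ↔ u ∉ A := by
  have := hG.between h
  simp only [hG.mem_right_iff] at this
  tauto

end Bipartition

section ExchangeDigraph

/-- The orientation of `G`, bipartite with color class `A`, in which the edges of `M` leave `A` and
all other edges enter `A`. Its directed paths are the ascending paths of `M`. -/
def exchangeDigraph (G : SimpleGraph α) (A : Set α) (M : Set (Sym2 α)) : Digraph α where
  Adj u v := G.Adj u v ∧ (s(u, v) ∈ M ↔ u ∈ A)

theorem Bipartition.exchangeDigraph_adj_comm (hG : Bipartition G A B) {u v : α}
    (h : G.Adj u v) :
    (exchangeDigraph G A M).Adj v u ↔ ¬ (exchangeDigraph G A M).Adj u v := by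
  simp only [exchangeDigraph, h, h.symm, true_and, Sym2.eq_swap (a := v),
    hG.mem_left_iff_of_adj h]
  tauto

theorem Bipartition.exchangeDigraph_swap_adj (hG : Bipartition G A B) {u v : α} :
    (exchangeDigraph G B M).Adj u v ↔ (exchangeDigraph G A M).Adj v u := by
  simp only [exchangeDigraph, G.adj_comm v u, Sym2.eq_swap (a := v), hG.mem_right_iff]
  exact and_congr_right fun h ↦ by rw [hG.mem_left_iff_of_adj h]

theorem Bipartition.exchangeDigraph_compl (hG : Bipartition G A B) :
    exchangeDigraph G B Mᶜ = exchangeDigraph G A M := by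
  ext u v
  simp only [exchangeDigraph, Set.mem_compl_iff, hG.mem_right_iff, not_iff_not]

theorem IsDirectedWalk.reverse (hG : Bipartition G A B) {x y : α} {p : G.Walk x y}
    (hp : IsDirectedWalk (exchangeDigraph G A M) p) :
    IsDirectedWalk (exchangeDigraph G B M) p.reverse := by
  intro d hd
  exact hG.exchangeDigraph_swap_adj.2 (hp d.symm (SimpleGraph.Walk.mem_darts_reverse.1 hd))

end ExchangeDigraph

section EdgeDeg

theorem edgeDeg_cons_of_not {l : List (Sym2 α)} {e : Sym2 α} {v : α} (h : ¬ (v ∈ e ∧ e ∈ M)) :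
    edgeDeg (e :: l) M v = edgeDeg l M v := by
  unfold edgeDeg
  congr 1
  ext f
  simp only [List.mem_cons, Set.mem_ofPred_eq]
  exact ⟨fun hf ↦ ⟨hf.1.resolve_left (by rintro rfl; exact h hf.2), hf.2⟩,
    fun hf ↦ ⟨.inr hf.1, hf.2⟩⟩

theorem edgeDeg_cons_eq_one {l : List (Sym2 α)} {e : Sym2 α} {v : α} (hl : ∀ f ∈ l, v ∉ f)
    (hv : v ∈ e) (he : e ∈ M) : edgeDeg (e :: l) M v = 1 := by
  rw [edgeDeg, Set.ncard_eq_one]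
  refine ⟨e, Set.eq_singleton_iff_unique_mem.2 ⟨⟨List.mem_cons_self, hv, he⟩, fun f hf ↦ ?_⟩⟩
  exact (List.mem_cons.1 hf.1).resolve_right fun hfl ↦ hl f hfl hf.2.1

theorem edgeDeg_reverse {x y v : α} (p : G.Walk x y) :
    edgeDeg p.reverse.edges M v = edgeDeg p.edges M v := by
  simp only [edgeDeg, SimpleGraph.Walk.edges_reverse, List.mem_reverse]

/-- At a vertex of `A`, the `M`-edges of a directed path are those leaving it along the path. -/
theorem IsDirectedWalk.edgeDeg_of_mem_left [DecidableEq α] (hG : Bipartition G A B) {x y : α}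
    {p : G.Walk x y} (hp : p.IsPath) (hd : IsDirectedWalk (exchangeDigraph G A M) p) {v : α}
    (hv : v ∈ p.support) (hvA : v ∈ A) : edgeDeg p.edges M v = if v = y then 0 else 1 := by
  induction p with
  | nil => simp_all [edgeDeg]
  | @cons x z y h q ih =>
    obtain ⟨hq, hxq⟩ := (SimpleGraph.Walk.cons_isPath_iff h q).1 hp
    obtain ⟨⟨-, hMA⟩, hdq⟩ : (exchangeDigraph G A M).Adj x z ∧
        IsDirectedWalk (exchangeDigraph G A M) q := by simpa [IsDirectedWalk] using hd
    rw [SimpleGraph.Walk.edges_cons]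
    by_cases hvx : v = x
    · subst hvx
      have hvy : v ≠ y := fun h ↦ hxq (h ▸ q.end_mem_support)
      rw [if_neg hvy]
      exact edgeDeg_cons_eq_one
        (fun f hf hvf ↦ hxq (q.mem_support_of_mem_edges hf hvf)) (Sym2.mem_mk_left v z)
        (hMA.2 hvA)
    · have hvq : v ∈ q.support := by simpa [hvx] using hv
      have hnot : ¬ (v ∈ s(x, z) ∧ s(x, z) ∈ M) := by
        rintro ⟨hvxz, hxzM⟩
        obtain rfl : v = z := (Sym2.mem_iff.1 hvxz).resolve_left hvx
        exact (hG.mem_left_iff_of_adj h).1 hvA (hMA.1 hxzM)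
      rw [edgeDeg_cons_of_not hnot, ih hq hdq hvq]

theorem IsDirectedWalk.edgeDeg_of_mem_right [DecidableEq α] (hG : Bipartition G A B) {x y : α}
    {p : G.Walk x y} (hp : p.IsPath) (hd : IsDirectedWalk (exchangeDigraph G A M) p) {v : α}
    (hv : v ∈ p.support) (hvB : v ∈ B) : edgeDeg p.edges M v = if v = x then 0 else 1 := by
  rw [← edgeDeg_reverse]
  exact (hd.reverse hG).edgeDeg_of_mem_left hG.symm hp.reverse (by simpa using hv) hvB

end EdgeDeg

section AscendingPaths

theorem IsDirectedWalk.isWedgePath (hG : Bipartition G A B) {x y : α} {p : G.Walk x y}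
    (hp : p.IsPath) (hd : IsDirectedWalk (exchangeDigraph G A M) p) (hx : x ∈ A) (hy : y ∈ A) :
    IsWedgePath M p := by
  classical
  refine ⟨hp, fun v hv hvy ↦ ?_, ?_⟩
  · by_cases hvA : v ∈ A
    · rw [hd.edgeDeg_of_mem_left hG hp hv hvA, if_neg hvy]
    · rw [hd.edgeDeg_of_mem_right hG hp hv (hG.mem_right_iff.2 hvA),
        if_neg (ne_of_mem_of_not_mem hx hvA).symm]
  · rw [hd.edgeDeg_of_mem_left hG hp p.end_mem_support hy, if_pos rfl]

theorem IsDirectedWalk.isSaturatedPath (hG : Bipartition G A B) {x y : α} {p : G.Walk x y}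
    (hp : p.IsPath) (hd : IsDirectedWalk (exchangeDigraph G A M) p) (hx : x ∈ A) (hy : y ∈ B) :
    IsSaturatedPath M p := by
  classical
  refine ⟨hp, fun v hv ↦ ?_⟩
  by_cases hvA : v ∈ A
  · rw [hd.edgeDeg_of_mem_left hG hp hv hvA,
      if_neg (ne_of_mem_of_not_mem hvA (hG.mem_right_iff.1 hy))]
  · rw [hd.edgeDeg_of_mem_right hG hp hv (hG.mem_right_iff.2 hvA),
      if_neg (ne_of_mem_of_not_mem hx hvA).symm]

theorem IsDirectedWalk.isExposedPath (hG : Bipartition G A B) {x y : α} {p : G.Walk x y}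
    (hp : p.IsPath) (hd : IsDirectedWalk (exchangeDigraph G A M) p) (hx : x ∈ B) (hy : y ∈ A) :
    IsExposedPath M p :=
  -- An `M`-exposed path is an `Mᶜ`-saturated one.
  (hG.exchangeDigraph_compl ▸ hd).isSaturatedPath hG.symm hp hx hy

theorem IsDirectedWalk.isAscending (hG : Bipartition G A B) {x y : α} {p : G.Walk x y}
    (hp : p.IsPath) (hd : IsDirectedWalk (exchangeDigraph G A M) p) : IsAscending A B M p :=
  ⟨hd.isWedgePath hG hp, hd.isSaturatedPath hG hp, hd.isExposedPath hG hp,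
    fun hx hy ↦ (hd.reverse hG).isWedgePath hG.symm hp.reverse hy hx⟩

theorem IsExposedPath.reverse {x y : α} {p : G.Walk x y} (hp : IsExposedPath M p) :
    IsExposedPath M p.reverse :=
  ⟨hp.1.reverse, fun v hv ↦ by rw [edgeDeg_reverse]; exact hp.2 v (by simpa using hv)⟩

end AscendingPaths

section Matching

theorem ncard_incident (M : Set (Sym2 α)) (v : α) :
    {e ∈ M | v ∈ e}.ncard = {w | s(v, w) ∈ M}.ncard := by
  have himage : {e ∈ M | v ∈ e} = (fun w ↦ s(v, w)) '' {w | s(v, w) ∈ M} := by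
    ext e
    constructor
    · rintro ⟨he, w, rfl⟩
      exact ⟨w, he, rfl⟩
    · rintro ⟨w, hw, rfl⟩
      exact ⟨hw, Sym2.mem_mk_left v w⟩
  rw [himage, Set.ncard_image_of_injective _ fun _ _ ↦ Sym2.congr_right.1]

theorem IsMaxBMatching.isTight (hM : IsMaxBMatching G b M) {C : FlexComp G b}
    (hC : ¬ LooseComp G b C) {v : α} (hv : v ∈ C.supp) : IsTight b M v :=
  (hM.1.2 v).eq_of_not_lt fun hlt ↦ hC ⟨v, hv, M, hM, hlt⟩

theorem ncard_exchangeDigraph_adj_eq [Finite α] (hM : M ⊆ G.edgeSet) (hN : N ⊆ G.edgeSet) {v : α}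
    (h : {e ∈ M | v ∈ e}.ncard = {e ∈ N | v ∈ e}.ncard) :
    {w | (exchangeDigraph G A M).Adj v w}.ncard = {w | (exchangeDigraph G A N).Adj v w}.ncard := by
  rw [ncard_incident, ncard_incident] at h
  have hMG : {w | s(v, w) ∈ M} ⊆ G.neighborSet v := fun _ hw ↦ hM hw
  have hNG : {w | s(v, w) ∈ N} ⊆ G.neighborSet v := fun _ hw ↦ hN hw
  by_cases hv : v ∈ A
  · have hout {L : Set (Sym2 α)} (hLG : {w | s(v, w) ∈ L} ⊆ G.neighborSet v) :
        {w | (exchangeDigraph G A L).Adj v w} = {w | s(v, w) ∈ L} := by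
      ext w
      simpa [exchangeDigraph, hv] using fun hw ↦ hLG hw
    rwa [hout hMG, hout hNG]
  · have hout (L : Set (Sym2 α)) :
        {w | (exchangeDigraph G A L).Adj v w} = G.neighborSet v \ {w | s(v, w) ∈ L} := by
      ext w
      simp [exchangeDigraph, hv]
    rw [hout, hout, Set.ncard_sdiff hMG, Set.ncard_sdiff hNG, h]

theorem ncard_reversed_out_eq_ncard_reversed_in [Finite α] (hG : Bipartition G A B)
    (hM : M ⊆ G.edgeSet) (hN : N ⊆ G.edgeSet) {v : α}
    (h : {e ∈ M | v ∈ e}.ncard = {e ∈ N | v ∈ e}.ncard) :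
    {w | (exchangeDigraph G A M).Adj v w ∧ (exchangeDigraph G A N).Adj w v}.ncard =
      {w | (exchangeDigraph G A M).Adj w v ∧ (exchangeDigraph G A N).Adj v w}.ncard := by
  have hout : {w | (exchangeDigraph G A M).Adj v w ∧ (exchangeDigraph G A N).Adj w v} =
      {w | (exchangeDigraph G A M).Adj v w} \ {w | (exchangeDigraph G A N).Adj v w} := by
    ext w
    exact and_congr_right fun hvw ↦ hG.exchangeDigraph_adj_comm hvw.1
  have hin : {w | (exchangeDigraph G A M).Adj w v ∧ (exchangeDigraph G A N).Adj v w} =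
      {w | (exchangeDigraph G A N).Adj v w} \ {w | (exchangeDigraph G A M).Adj v w} := by
    ext w
    exact and_comm.trans (and_congr_right fun hvw ↦ hG.exchangeDigraph_adj_comm hvw.1)
  rw [hout, hin]
  exact (Set.ncard_eq_ncard_iff_ncard_sdiff_eq_ncard_sdiff).1 (ncard_exchangeDigraph_adj_eq hM hN h)

end Matching

section FlexibleComponents

theorem flexGraph_le : flexGraph G b ≤ G := by
  rintro u v ⟨⟨N, hN, huv⟩, -⟩
  exact hN.1.1 huv

theorem IsMaxBMatching.flexGraph_adj_iff_exists_reversed (hM : IsMaxBMatching G b M)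
    (hG : Bipartition G A B) {u v : α} (huv : (exchangeDigraph G A M).Adj u v) :
    (flexGraph G b).Adj u v ↔ ∃ N, IsMaxBMatching G b N ∧ (exchangeDigraph G A N).Adj v u := by
  have hrev (N : Set (Sym2 α)) :
      (exchangeDigraph G A N).Adj v u ↔ ¬ (s(u, v) ∈ N ↔ s(u, v) ∈ M) := by
    rw [hG.exchangeDigraph_adj_comm huv.1, huv.2]
    simp [exchangeDigraph, huv.1]
  simp only [hrev]
  constructor
  · rintro ⟨⟨N₁, hN₁, h₁⟩, N₂, hN₂, h₂⟩
    by_cases h : s(u, v) ∈ M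
    · exact ⟨N₂, hN₂, by simp [h, h₂]⟩
    · exact ⟨N₁, hN₁, by simp [h, h₁]⟩
  · rintro ⟨N, hN, h⟩
    by_cases hm : s(u, v) ∈ M
    · exact ⟨⟨M, hM, hm⟩, N, hN, by simpa [hm] using h⟩
    · exact ⟨⟨N, hN, by simpa [hm] using h⟩, M, hM, hm⟩

theorem reachesWithin_supp_symm_of_adj [Finite α] (hG : Bipartition G A B)
    (hM : IsMaxBMatching G b M) {C : FlexComp G b} (hC : ¬ LooseComp G b C) {u v : α}
    (hv : v ∈ C.supp) (hflex : (flexGraph G b).Adj u v)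
    (huv : (exchangeDigraph G A M).Adj u v) :
    ReachesWithin (exchangeDigraph G A M) C.supp v u := by
  obtain ⟨N, hN, hvu⟩ := (hM.flexGraph_adj_iff_exists_reversed hG huv).1 hflex
  have hclosed : ∀ x ∈ {x | ReachesWithin (exchangeDigraph G A M) C.supp v x}, ∀ y,
      (exchangeDigraph G A M).Adj x y ∧ (exchangeDigraph G A N).Adj y x →
        y ∈ {x | ReachesWithin (exchangeDigraph G A M) C.supp v x} := by
    intro x hx y ⟨hxy, hyx⟩
    have hadj : (flexGraph G b).Adj x y :=
      (hM.flexGraph_adj_iff_exists_reversed hG hxy).2 ⟨N, hN, hyx⟩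
    exact hx.tail ⟨hxy, (C.mem_supp_congr_adj hadj).1 (hx.mem hv)⟩
  refine mem_of_rel_of_balanced hclosed
    (fun x hx ↦ ncard_reversed_out_eq_ncard_reversed_in hG hM.1.1 hN.1.1 ?_) .refl ⟨huv, hvu⟩
  exact (hM.isTight hC (hx.mem hv)).trans (hN.isTight hC (hx.mem hv)).symm

theorem reachesWithin_supp [Finite α] (hG : Bipartition G A B) (hM : IsMaxBMatching G b M)
    {C : FlexComp G b} (hC : ¬ LooseComp G b C) {u v : α} (hu : u ∈ C.supp) (hv : v ∈ C.supp) :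
    ReachesWithin (exchangeDigraph G A M) C.supp u v := by
  obtain ⟨p⟩ := SimpleGraph.ConnectedComponent.exact (hu.trans hv.symm)
  induction p with
  | nil => exact .refl
  | @cons u w v huw _ ih =>
    have hw : w ∈ C.supp := (C.mem_supp_congr_adj huw).1 hu
    suffices h : ReachesWithin (exchangeDigraph G A M) C.supp u w from h.trans (ih hw hv)
    by_cases harc : (exchangeDigraph G A M).Adj u w
    · exact .single ⟨harc, hw⟩
    · exact reachesWithin_supp_symm_of_adj hG hM hC hu huw.symm
        ((hG.exchangeDigraph_adj_comm (flexGraph_le huw)).2 harc)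

theorem StepRel.eq_or_exists_adj (hG : Bipartition G A B) (hM : IsMaxBMatching G b M)
    {C₁ C₂ : FlexComp G b} (h : StepRel G b A B C₁ C₂) :
    C₁ = C₂ ∨ ∃ u ∈ C₁.supp, ∃ v ∈ C₂.supp, (exchangeDigraph G A M).Adj u v := by
  refine h.imp_right ?_
  rintro (⟨u, ⟨hu, huA⟩, v, ⟨hv, -⟩, he, hmem⟩ | ⟨u, ⟨hu, huA⟩, v, ⟨hv, -⟩, he, hnot⟩)
  · exact ⟨u, hu, v, hv, he, iff_of_true (hmem M hM) huA⟩
  · refine ⟨v, hv, u, hu, (hG.exchangeDigraph_adj_comm he).2 fun h ↦ ?_⟩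
    exact hnot M hM (h.2.2 huA)

theorem reachesWithin_iUnion_supp [Finite α] (hG : Bipartition G A B) {k : ℕ}
    {D : Fin (k + 1) → FlexComp G b} (hloose : ∀ i, ¬ LooseComp G b (D i))
    (hchain : ∀ i : Fin k, StepRel G b A B (D i.castSucc) (D i.succ))
    (hM : IsMaxBMatching G b M) {x : α} (hx : x ∈ (D 0).supp) (j : Fin (k + 1)) {y : α}
    (hy : y ∈ (D j).supp) :
    ReachesWithin (exchangeDigraph G A M) (⋃ i, (D i).supp) x y := by
  have hsubset (i : Fin (k + 1)) : (D i).supp ⊆ ⋃ i, (D i).supp :=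
    Set.subset_iUnion_of_subset i subset_rfl
  have hwithin {i : Fin (k + 1)} {u v : α} (hu : u ∈ (D i).supp) (hv : v ∈ (D i).supp) :
      ReachesWithin (exchangeDigraph G A M) (⋃ i, (D i).supp) u v :=
    (reachesWithin_supp hG hM (hloose i) hu hv).mono (hsubset i)
  induction j using Fin.induction generalizing y with
  | zero => exact hwithin hx hy
  | succ i ih =>
    obtain heq | ⟨u, hu, v, hv, huv⟩ := (hchain i).eq_or_exists_adj hG hM
    · exact ih (heq ▸ hy)
    · exact ((ih hu).tail ⟨huv, hsubset _ hv⟩).trans (hwithin hv hy)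

theorem exists_isAscending [Finite α] (hG : Bipartition G A B) {k : ℕ}
    {D : Fin (k + 1) → FlexComp G b} (hloose : ∀ i, ¬ LooseComp G b (D i))
    (hchain : ∀ i : Fin k, StepRel G b A B (D i.castSucc) (D i.succ))
    (hM : IsMaxBMatching G b M) {x y : α} (hx : x ∈ (D 0).supp)
    (hy : y ∈ (D (Fin.last k)).supp) :
    ∃ p : G.Walk x y, IsAscending A B M p ∧ ∀ w ∈ p.support, w ∈ ⋃ i, (D i).supp := by
  obtain ⟨p, hp, hd, hsupp⟩ :=
    (reachesWithin_iUnion_supp hG hloose hchain hM hx _ hy).exists_isPath_isDirectedWalk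
      (fun _ _ hadj ↦ And.left hadj) (Set.mem_iUnion.2 ⟨0, hx⟩)
  exact ⟨p, hd.isAscending hG hp, hsupp⟩

end FlexibleComponents

theorem stmt_14_general [Finite α] (hG : Bipartition G A B) {k : ℕ}
    {D : Fin (k + 1) → FlexComp G b} (hloose : ∀ i, ¬ LooseComp G b (D i))
    (hchain : ∀ i : Fin k, StepRel G b A B (D i.castSucc) (D i.succ))
    (hM : IsMaxBMatching G b M) :
    (∀ x ∈ (D 0).supp ∩ A, ∀ y ∈ (D (Fin.last k)).supp ∩ A, ∃ p : G.Walk x y,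
      IsWedgePath M p ∧ ∀ w ∈ p.support, w ∈ ⋃ i, (D i).supp) ∧
    (∀ x ∈ (D 0).supp ∩ A, ∀ y ∈ (D (Fin.last k)).supp ∩ B, ∃ p : G.Walk x y,
      IsSaturatedPath M p ∧ ∀ w ∈ p.support, w ∈ ⋃ i, (D i).supp) ∧
    (∀ x ∈ (D (Fin.last k)).supp ∩ A, ∀ y ∈ (D 0).supp ∩ B, ∃ p : G.Walk x y,
      IsExposedPath M p ∧ ∀ w ∈ p.support, w ∈ ⋃ i, (D i).supp) ∧
    (∀ x ∈ (D 0).supp ∩ B, ∀ y ∈ (D (Fin.last k)).supp ∩ B, ∃ p : G.Walk y x,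
      IsWedgePath M p ∧ ∀ w ∈ p.support, w ∈ ⋃ i, (D i).supp) := by
  refine ⟨fun x hx y hy ↦ ?_, fun x hx y hy ↦ ?_, fun y hy x hx ↦ ?_, fun x hx y hy ↦ ?_⟩ <;>
    obtain ⟨p, ⟨hAA, hAB, hBA, hBB⟩, hsupp⟩ := exists_isAscending hG hloose hchain hM hx.1 hy.1
  · exact ⟨p, hAA hx.2 hy.2, hsupp⟩
  · exact ⟨p, hAB hx.2 hy.2, hsupp⟩
  · exact ⟨p.reverse, (hBA hx.2 hy.2).reverse, by simpa using hsupp⟩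
  · exact ⟨p.reverse, hBB hx.2 hy.2, by simpa using hsupp⟩

/-- Let `C₁ ⪯_A C₂` be witnessed by a chain `D₀ ⊴_A ⋯ ⊴_A D_k` of `b`-consistent flexible
components. Then for every maximum `b`-matching `M`: wedge/saturated/exposed/wedge paths
exist as stated, and they may be chosen with all vertices in `V(D₀) ∪ ⋯ ∪ V(D_k)`. -/
theorem stmt_14 (G : SimpleGraph V) (A B : Set V) (hG : Bipartition G A B) (b : V → ℕ)
    (k : ℕ) (D : Fin (k + 1) → FlexComp G b)
    (hcons : ∀ i, ConsistentComp G b (D i))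
    (hchain : ∀ i : Fin k, StepRel G b A B (D i.castSucc) (D i.succ))
    (C₁ C₂ : FlexComp G b) (hD1 : D 0 = C₁) (hDk : D (Fin.last k) = C₂)
    (M : Set (Sym2 V)) (hM : IsMaxBMatching G b M) :
    (∀ x ∈ C₁.supp ∩ A, ∀ y ∈ C₂.supp ∩ A, ∃ p : G.Walk x y,
      IsWedgePath M p ∧ ∀ w ∈ p.support, w ∈ ⋃ i, (D i).supp) ∧
    (∀ x ∈ C₁.supp ∩ A, ∀ y ∈ C₂.supp ∩ B, ∃ p : G.Walk x y,
      IsSaturatedPath M p ∧ ∀ w ∈ p.support, w ∈ ⋃ i, (D i).supp) ∧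
    (∀ x ∈ C₂.supp ∩ A, ∀ y ∈ C₁.supp ∩ B, ∃ p : G.Walk x y,
      IsExposedPath M p ∧ ∀ w ∈ p.support, w ∈ ⋃ i, (D i).supp) ∧
    (∀ x ∈ C₁.supp ∩ B, ∀ y ∈ C₂.supp ∩ B, ∃ p : G.Walk y x,
      IsWedgePath M p ∧ ∀ w ∈ p.support, w ∈ ⋃ i, (D i).supp) := by
  subst hD1 hDk
  exact stmt_14_general hG (fun i hi ↦ hcons i (.inl hi)) hchain hM
end
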